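/- With f₂(x) = x², assume κ₄(F_{f₂,n}(Z)) → 0 as n → ∞. Then there exist constants c, C > 0 such that for every n ≥ 1: c · max{ κ₄(F_{f₂,n}(Z)), |κ₃(F_{f₂,n}(Z))| } ≤ d_TV( F_{f₂,n}(Z), N ) ≤ C · max{ κ₄(F_{f₂,n}(Z)), |κ₃(F_{f₂,n}(Z))| }, where N is a standard Gaussian random variable. -/

import Mathlib

open MeasureTheory ProbabilityTheory Filter
open scoped NNReal ENNReal

noncomputable section

variable {Ω : Type*} [MeasureSpace Ω]

/-- `Z` is a centered stationary Gaussian sequence with covariance `r`. -/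
def IsCSG (Z : ℤ → Ω → ℝ) (r : ℤ → ℝ) : Prop :=
  (∀ k, Measurable (Z k)) ∧
  (∀ (s : Finset ℤ) (a : ℤ → ℝ), ∃ v : ℝ≥0,
    Measure.map (fun ω => ∑ k ∈ s, a k * Z k ω) (ℙ : Measure Ω) = gaussianReal 0 v) ∧
  (∀ j k : ℤ, ∫ ω, Z j ω * Z k ω = r (k - j)) ∧
  0 < r 0

/-- `m`-th probabilists' Hermite polynomial, as a function on `ℝ`. -/
def hermiteFun (m : ℕ) (x : ℝ) : ℝ := Polynomial.aeval x (Polynomial.hermite m)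

/-- The polynomial `f_q(x) = ∑_{k=0}^{q/2} d_{2k} He_{2k}(x/√r0)`. -/
def fpoly (r0 : ℝ) (d : ℕ → ℝ) (q : ℕ) (x : ℝ) : ℝ :=
  ∑ k ∈ Finset.range (q / 2 + 1), d (2 * k) * hermiteFun (2 * k) (x / Real.sqrt r0)

/-- Polynomial variation `Q_{f,n}(X)`. -/
def Qvar (f : ℝ → ℝ) (X : ℤ → Ω → ℝ) (n : ℕ) (ω : Ω) : ℝ :=
  (1 / (n : ℝ)) * ∑ i ∈ Finset.range n, f (X (i : ℤ) ω)

/-- `λ_f(X) = E[f(X_0)]`. -/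
def lamE (f : ℝ → ℝ) (X : ℤ → Ω → ℝ) : ℝ := ∫ ω, f (X 0 ω)

/-- `U_{f,n}(X) = √n (Q_{f,n}(X) − λ_f(X))`. -/
def Ustat (f : ℝ → ℝ) (X : ℤ → Ω → ℝ) (n : ℕ) (ω : Ω) : ℝ :=
  Real.sqrt n * (Qvar f X n ω - lamE f X)

/-- Variance of `U_{f,n}(X)`. -/
def varU (f : ℝ → ℝ) (X : ℤ → Ω → ℝ) (n : ℕ) : ℝ := ∫ ω, (Ustat f X n ω) ^ 2

/-- Standardized statistic `F_{f,n}(X)`. -/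
def Fstat (f : ℝ → ℝ) (X : ℤ → Ω → ℝ) (n : ℕ) (ω : Ω) : ℝ :=
  Ustat f X n ω / Real.sqrt (varU f X n)

/-- fourth cumulant `κ₄(X) = E[X⁴] − 3 (E[X²])²` of a centered random variable. -/
def kappa4 (X : Ω → ℝ) : ℝ := (∫ ω, X ω ^ 4) - 3 * (∫ ω, X ω ^ 2) ^ 2

/-- third cumulant `κ₃(X) = E[X³]`. -/
def kappa3 (X : Ω → ℝ) : ℝ := ∫ ω, X ω ^ 3

/-- `u_{f_q}(Z) = ∑_{k=1}^{q/2} d_{2k}² (2k)! ∑_{j∈ℤ} (r(j)/r(0))^{2k}`. -/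
def ufq (r : ℤ → ℝ) (d : ℕ → ℝ) (q : ℕ) : ℝ :=
  ∑ k ∈ Finset.Icc 1 (q / 2),
    (d (2 * k)) ^ 2 * (Nat.factorial (2 * k)) * ∑' j : ℤ, (r j / r 0) ^ (2 * k)

/-- Total variation distance between two laws on `ℝ`. -/
def dTV (μ ν : Measure ℝ) : ℝ :=
  ⨆ A : {A : Set ℝ // MeasurableSet A}, |(μ A.1).toReal - (ν A.1).toReal|

/-- Wasserstein distance between two laws on `ℝ`. -/
def dW (μ ν : Measure ℝ) : ℝ :=
  ⨆ f : {f : ℝ → ℝ // LipschitzWith 1 f}, |(∫ x, f.1 x ∂μ) - ∫ x, f.1 x ∂ν|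

/-- The quadratic function `f₂(x) = x²`. -/
def f2 : ℝ → ℝ := fun x => x ^ 2

/-- `U_{f₂,n}(X) = √n (Q_{f₂,n}(X) − r(0))`, quadratic case. -/
def U2 (X : ℤ → Ω → ℝ) (r0 : ℝ) (n : ℕ) (ω : Ω) : ℝ :=
  Real.sqrt n * (Qvar f2 X n ω - r0)

/-- Variance of `U_{f₂,n}`. -/
def varU2 (X : ℤ → Ω → ℝ) (r0 : ℝ) (n : ℕ) : ℝ := ∫ ω, (U2 X r0 n ω) ^ 2

/-- Standardized quadratic statistic `F_{f₂,n}`. -/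
def F2stat (X : ℤ → Ω → ℝ) (r0 : ℝ) (n : ℕ) (ω : Ω) : ℝ :=
  U2 X r0 n ω / Real.sqrt (varU2 X r0 n)

/-- `p`-th order finite difference of a sequence of processes. -/
def fdiff : ℕ → (ℤ → Ω → ℝ) → (ℤ → Ω → ℝ)
  | 0, Z => Z
  | (p + 1), Z => fun k ω => fdiff p Z (k + 1) ω - fdiff p Z k ω

/-! ### Total variation distance -/

lemma dTV_bddAbove (μ ν : Measure ℝ) [IsProbabilityMeasure μ] [IsProbabilityMeasure ν] :
    BddAbove (Set.range fun A : {A : Set ℝ // MeasurableSet A} =>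
      |(μ A.1).toReal - (ν A.1).toReal|) := by
  refine ⟨1, ?_⟩
  rintro _ ⟨A, rfl⟩
  have h1 : (μ A.1).toReal ≤ 1 := measureReal_le_one
  have h2 : (ν A.1).toReal ≤ 1 := measureReal_le_one
  have h3 : 0 ≤ (μ A.1).toReal := ENNReal.toReal_nonneg
  have h4 : 0 ≤ (ν A.1).toReal := ENNReal.toReal_nonneg
  exact abs_le.2 ⟨by linarith, by linarith⟩

lemma abs_sub_le_dTV (μ ν : Measure ℝ) [IsProbabilityMeasure μ] [IsProbabilityMeasure ν]
    {A : Set ℝ} (hA : MeasurableSet A) :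
    |(μ A).toReal - (ν A).toReal| ≤ dTV μ ν :=
  le_ciSup (dTV_bddAbove μ ν) ⟨A, hA⟩

/-- Two probability measures at total variation distance `0` coincide. -/
lemma eq_of_dTV_nonpos (μ ν : Measure ℝ) [IsProbabilityMeasure μ] [IsProbabilityMeasure ν]
    (h : dTV μ ν ≤ 0) : μ = ν := by
  ext A hA
  have h1 := (abs_sub_le_dTV μ ν hA).trans h
  have h2 : (μ A).toReal = (ν A).toReal := by
    have := abs_nonpos_iff.1 h1
    linarith
  exact (ENNReal.toReal_eq_toReal_iff' (measure_ne_top _ _) (measure_ne_top _ _)).1 h2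

/-- Integrals of measurable functions with values in `[0, M]` are controlled by `dTV`. -/
lemma abs_integral_sub_le_dTV (μ ν : Measure ℝ) [IsProbabilityMeasure μ]
    [IsProbabilityMeasure ν] {h : ℝ → ℝ} (hm : Measurable h) {M : ℝ}
    (h0 : ∀ x, 0 ≤ h x) (hM : ∀ x, h x ≤ M) :
    |(∫ x, h x ∂μ) - ∫ x, h x ∂ν| ≤ M * dTV μ ν := by
  have hM0 : 0 ≤ M := (h0 0).trans (hM 0)
  have hint : ∀ (ρ : Measure ℝ) [IsProbabilityMeasure ρ], Integrable h ρ := fun ρ _ =>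
    Integrable.of_bound hm.aestronglyMeasurable M
      (Eventually.of_forall fun x => by rw [Real.norm_of_nonneg (h0 x)]; exact hM x)
  have key : ∀ (ρ : Measure ℝ) [IsProbabilityMeasure ρ],
      ∫ x, h x ∂ρ = ∫ t in Set.Ioc 0 M, ρ.real {a | t ≤ h a} := fun ρ _ =>
    (hint ρ).integral_eq_integral_Ioc_meas_le (Eventually.of_forall h0)
      (Eventually.of_forall hM)
  have hI : ∀ (ρ : Measure ℝ) [IsProbabilityMeasure ρ],
      IntegrableOn (fun t => ρ.real {a | t ≤ h a}) (Set.Ioc 0 M) := by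
    intro ρ _
    have hanti : Antitone fun t => ρ.real {a | t ≤ h a} := fun s t hst =>
      measureReal_mono (fun a ha => le_trans hst ha)
    exact (hanti.antitoneOn (Set.Icc 0 M)).integrableOn_isCompact isCompact_Icc |>.mono_set
      Set.Ioc_subset_Icc_self
  rw [key μ, key ν, ← integral_sub (hI μ) (hI ν)]
  have := norm_setIntegral_le_of_norm_le_const (μ := volume) (s := Set.Ioc 0 M)
    (f := fun t => μ.real {a | t ≤ h a} - ν.real {a | t ≤ h a}) (C := dTV μ ν)
    (by simp) (fun t _ => abs_sub_le_dTV μ ν (measurableSet_le measurable_const hm))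
  rw [Real.norm_eq_abs] at this
  refine this.trans (le_of_eq ?_)
  simp [Measure.real, hM0, mul_comm]

/-- To bound `dTV` it suffices to test against continuous functions with values in `[0, 1]`. -/
lemma dTV_le_of_continuous (μ ν : Measure ℝ) [IsProbabilityMeasure μ] [IsProbabilityMeasure ν]
    {B : ℝ} (hB : ∀ h : ℝ → ℝ, Continuous h → (∀ x, 0 ≤ h x) → (∀ x, h x ≤ 1) →
      |(∫ x, h x ∂μ) - ∫ x, h x ∂ν| ≤ B) : dTV μ ν ≤ B := by
  have closed : ∀ K : Set ℝ, IsClosed K → |μ.real K - ν.real K| ≤ B := by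
    intro K hK
    have δpos : ∀ n : ℕ, (0 : ℝ) < 1 / ((n : ℝ) + 1) := fun n => Nat.one_div_pos_of_nat
    have lim : ∀ (ρ : Measure ℝ) [IsProbabilityMeasure ρ], Tendsto
        (fun n => ∫ x, (thickenedIndicator (δpos n) K x : ℝ) ∂ρ) atTop (nhds (ρ.real K)) :=
      fun ρ _ => tendsto_integral_thickenedIndicator_of_isClosed ρ hK δpos
        tendsto_one_div_add_atTop_nhds_zero_nat
    refine le_of_tendsto ((lim μ).sub (lim ν)).abs (Eventually.of_forall fun n => ?_)
    refine hB _ ?_ (fun x => NNReal.coe_nonneg _) (fun x => ?_)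
    · exact NNReal.continuous_coe.comp (thickenedIndicator (δpos n) K).continuous
    · exact_mod_cast thickenedIndicator_le_one (δpos n) K x
  have one_sided : ∀ (ρ σ : Measure ℝ) [IsProbabilityMeasure ρ] [IsProbabilityMeasure σ],
      (∀ K : Set ℝ, IsClosed K → ρ.real K - σ.real K ≤ B) →
      ∀ A : Set ℝ, MeasurableSet A → ρ.real A - σ.real A ≤ B := by
    intro ρ σ _ _ hK A hA
    refine le_of_forall_pos_le_add fun ε hε => ?_
    obtain ⟨K, hKA, hKc, hlt⟩ := hA.exists_isClosed_lt_add (measure_ne_top ρ A)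
      (ε := ENNReal.ofReal ε) (by simpa using hε)
    have h1 : ρ.real A ≤ ρ.real K + ε := by
      have := ENNReal.toReal_mono (by finiteness) hlt.le
      rwa [ENNReal.toReal_add (by finiteness) (by finiteness),
        ENNReal.toReal_ofReal hε.le] at this
    have h2 : σ.real K ≤ σ.real A := measureReal_mono hKA
    have := hK K hKc
    linarith
  have : Nonempty {A : Set ℝ // MeasurableSet A} := ⟨⟨∅, MeasurableSet.empty⟩⟩
  refine ciSup_le fun A => abs_sub_le_iff.2 ⟨?_, ?_⟩
  · exact one_sided μ ν (fun K hK => (abs_sub_le_iff.1 (closed K hK)).1) A.1 A.2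
  · exact one_sided ν μ (fun K hK => (abs_sub_le_iff.1 (closed K hK)).2) A.1 A.2

/-! ### Stein's equation for the standard Gaussian law -/

lemma hasDerivAt_gaussianPDFReal (x : ℝ) :
    HasDerivAt (gaussianPDFReal 0 1) (-x * gaussianPDFReal 0 1 x) x := by
  have h : HasDerivAt (fun y : ℝ => (√(2 * Real.pi * (1 : ℝ≥0)))⁻¹ *
      Real.exp (-(y - 0) ^ 2 / (2 * (1 : ℝ≥0))))
      ((√(2 * Real.pi * (1 : ℝ≥0)))⁻¹ *
        (Real.exp (-(x - 0) ^ 2 / (2 * (1 : ℝ≥0))) * (-x))) x := by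
    refine HasDerivAt.const_mul _ (HasDerivAt.exp ?_)
    have := (((hasDerivAt_id x).sub_const 0).pow 2).neg.div_const (2 * ((1 : ℝ≥0) : ℝ))
    exact this.congr_deriv (by simp; ring)
  rw [gaussianPDFReal_def]
  exact h.congr_deriv (by ring)

lemma continuous_gaussianPDFReal : Continuous (gaussianPDFReal 0 1) :=
  continuous_iff_continuousAt.2 fun x => (hasDerivAt_gaussianPDFReal x).continuousAt

lemma gaussianPDFReal_neg_arg (x : ℝ) : gaussianPDFReal 0 1 (-x) = gaussianPDFReal 0 1 x := by
  simp [gaussianPDFReal]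

lemma integrable_mul_gaussianPDFReal : Integrable fun x : ℝ => x * gaussianPDFReal 0 1 x := by
  have h := integrable_mul_exp_neg_mul_sq (b := 1 / 2) (by norm_num)
  refine (h.const_mul (√(2 * Real.pi * (1 : ℝ≥0)))⁻¹).congr (Eventually.of_forall fun x => ?_)
  simp only [gaussianPDFReal, sub_zero]
  have : -(x ^ 2) / (2 * ((1 : ℝ≥0) : ℝ)) = -(1 / 2) * x ^ 2 := by simp; ring
  rw [this]
  ring

lemma tendsto_gaussianPDFReal_atTop :
    Tendsto (gaussianPDFReal 0 1) atTop (nhds 0) := by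
  have h1 : Tendsto (fun x : ℝ => -x ^ 2 / 2) atTop atBot := by
    simp_rw [neg_div]
    exact tendsto_neg_atTop_atBot.comp
      ((tendsto_pow_atTop two_ne_zero).atTop_div_const two_pos)
  have h2 := (Real.tendsto_exp_atBot.comp h1).const_mul (√(2 * Real.pi * (1 : ℝ≥0)))⁻¹
  rw [mul_zero] at h2
  refine h2.congr fun x => ?_
  simp [gaussianPDFReal]

/-- Mills ratio estimate. -/
lemma mul_integral_Ioi_gaussianPDFReal_le {x : ℝ} :
    x * ∫ y in Set.Ioi x, gaussianPDFReal 0 1 y ≤ gaussianPDFReal 0 1 x := by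
  have h1 : ∫ y in Set.Ioi x, y * gaussianPDFReal 0 1 y = gaussianPDFReal 0 1 x := by
    have := integral_Ioi_of_hasDerivAt_of_tendsto' (a := x)
      (f := fun y => -gaussianPDFReal 0 1 y) (f' := fun y => y * gaussianPDFReal 0 1 y) (m := 0)
      (fun y _ => (hasDerivAt_gaussianPDFReal y).neg.congr_deriv (by ring))
      integrable_mul_gaussianPDFReal.integrableOn (by simpa using tendsto_gaussianPDFReal_atTop.neg)
    simpa using this
  rw [← h1, ← integral_const_mul]
  refine setIntegral_mono_on ((integrable_gaussianPDFReal 0 1).const_mul x).integrableOn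
    integrable_mul_gaussianPDFReal.integrableOn measurableSet_Ioi fun y hy => ?_
  exact mul_le_mul_of_nonneg_right (le_of_lt hy) (gaussianPDFReal_nonneg 0 1 y)

lemma exists_integral_Ioi_gaussianPDFReal_le :
    ∃ C : ℝ, 1 ≤ C ∧ ∀ x : ℝ, 0 ≤ x →
      ∫ y in Set.Ioi x, gaussianPDFReal 0 1 y ≤ C * gaussianPDFReal 0 1 x := by
  refine ⟨max 1 (gaussianPDFReal 0 1 1)⁻¹, le_max_left _ _, fun x hx => ?_⟩
  have hw := gaussianPDFReal_pos 0 1 x one_ne_zero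
  have hT : 0 ≤ ∫ y in Set.Ioi x, gaussianPDFReal 0 1 y :=
    setIntegral_nonneg measurableSet_Ioi fun y _ => gaussianPDFReal_nonneg 0 1 y
  rcases le_total 1 x with h | h
  · have h1 := mul_integral_Ioi_gaussianPDFReal_le (x := x)
    have h2 : 1 * gaussianPDFReal 0 1 x ≤ max 1 (gaussianPDFReal 0 1 1)⁻¹ * gaussianPDFReal 0 1 x :=
      mul_le_mul_of_nonneg_right (le_max_left _ _) hw.le
    nlinarith
  · have h1 : ∫ y in Set.Ioi x, gaussianPDFReal 0 1 y ≤ 1 := by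
      rw [← integral_gaussianPDFReal_eq_one 0 (v := 1) one_ne_zero]
      exact setIntegral_le_integral (integrable_gaussianPDFReal 0 1)
        (Eventually.of_forall fun y => gaussianPDFReal_nonneg 0 1 y)
    have hw1 := gaussianPDFReal_pos 0 1 1 one_ne_zero
    have h3 : gaussianPDFReal 0 1 1 ≤ gaussianPDFReal 0 1 x := by
      simp only [gaussianPDFReal]
      gcongr
    calc _ ≤ (1 : ℝ) := h1
      _ = (gaussianPDFReal 0 1 1)⁻¹ * gaussianPDFReal 0 1 1 := by field_simp
      _ ≤ _ := mul_le_mul (le_max_right _ _) h3 hw1.le (by positivity)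

/-- Stein's equation with a bounded continuous right-hand side has a bounded `C¹` solution
with bounded derivative. -/
lemma exists_stein_solution : ∃ C : ℝ, 0 < C ∧ ∀ (h : ℝ → ℝ) (M : ℝ), Continuous h →
    (∀ x, |h x| ≤ M) → ∃ f f' : ℝ → ℝ, Continuous f' ∧ (∀ x, HasDerivAt f (f' x) x) ∧
      (∀ x, f' x - x * f x = h x - ∫ y, h y ∂(gaussianReal 0 1)) ∧
      (∀ x, |f x| ≤ C * M) ∧ ∀ x, |f' x| ≤ C * M := by
  obtain ⟨C, hC1, hC⟩ := exists_integral_Ioi_gaussianPDFReal_le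
  refine ⟨4 * C, by linarith, fun h M hc hM => ?_⟩
  have hM0 : 0 ≤ M := (abs_nonneg _).trans (hM 0)
  set m := ∫ y, h y ∂(gaussianReal 0 1) with hm
  set w := gaussianPDFReal 0 1 with hw
  have wpos : ∀ x, 0 < w x := fun x => gaussianPDFReal_pos 0 1 x one_ne_zero
  have wcont : Continuous w := continuous_gaussianPDFReal
  have wint : Integrable w := integrable_gaussianPDFReal 0 1
  have hmM : |m| ≤ M := by
    have := norm_integral_le_of_norm_le_const (μ := gaussianReal 0 1) (f := h) (C := M)
      (Eventually.of_forall hM)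
    simpa using this
  set k : ℝ → ℝ := fun x => h x - m with hk
  have kcont : Continuous k := hc.sub continuous_const
  have kM : ∀ x, |k x| ≤ 2 * M := fun x => by
    have := abs_sub (h x) m
    have := hM x
    simp only [hk]; linarith
  have hwint : Integrable fun x => h x * w x := by
    refine wint.bdd_mul (c := M) hc.aestronglyMeasurable (Eventually.of_forall hM)
  have kwint : Integrable fun x => k x * w x := by
    refine wint.bdd_mul (c := 2 * M) kcont.aestronglyMeasurable (Eventually.of_forall kM)
  have kwcont : Continuous fun x => k x * w x := kcont.mul wcont
  have hm' : m = ∫ x, h x * w x := by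
    rw [hm, integral_gaussianReal_eq_integral_smul one_ne_zero]
    simp [hw, mul_comm]
  have kw0 : ∫ x, k x * w x = 0 := by
    have : ∀ x, k x * w x = h x * w x - m * w x := fun x => by simp only [hk]; ring
    simp_rw [this]
    rw [integral_sub hwint (wint.const_mul m), integral_const_mul, ← hm',
      integral_gaussianPDFReal_eq_one 0 one_ne_zero]
    ring
  set I : ℝ → ℝ := fun x => ∫ y in Set.Iic x, k y * w y with hI
  have Ider : ∀ x, HasDerivAt I (k x * w x) x := by
    intro x
    have h1 : I = fun x => (∫ y in Set.Iic 0, k y * w y) + ∫ y in (0 : ℝ)..x, k y * w y := by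
      funext x
      have := intervalIntegral.integral_Iic_sub_Iic (a := 0) (b := x)
        (f := fun y => k y * w y) (μ := volume) kwint.integrableOn kwint.integrableOn
      rw [← this]; simp [hI]
    rw [h1]
    exact (intervalIntegral.integral_hasDerivAt_right (kwint.intervalIntegrable)
      (kwcont.stronglyMeasurableAtFilter _ _) kwcont.continuousAt).const_add _
  have tail : ∀ s : Set ℝ, MeasurableSet s →
      |∫ y in s, k y * w y| ≤ 2 * M * ∫ y in s, w y := by
    intro s hs
    rw [← integral_const_mul, ← Real.norm_eq_abs]
    refine (norm_integral_le_integral_norm _).trans ?_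
    refine setIntegral_mono kwint.norm.integrableOn (wint.const_mul _).integrableOn fun y => ?_
    simp only [norm_mul, Real.norm_eq_abs, abs_of_pos (wpos y)]
    exact mul_le_mul_of_nonneg_right (kM y) (wpos y).le
  have Ibd : ∀ x, |I x| ≤ 2 * M * ∫ y in Set.Ioi |x|, w y := by
    intro x
    rcases le_total x 0 with hx | hx
    · refine (tail _ measurableSet_Iic).trans (le_of_eq ?_)
      rw [abs_of_nonpos hx, ← integral_comp_neg_Iic]
      simp_rw [hw, gaussianPDFReal_neg_arg]
    · have h1 : I x = -∫ y in Set.Ioi x, k y * w y := by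
        have := intervalIntegral.integral_Iic_add_Ioi (b := x) (f := fun y => k y * w y)
          (μ := volume) kwint.integrableOn kwint.integrableOn
        rw [kw0] at this
        simp only [hI]; linarith
      rw [h1, abs_neg, abs_of_nonneg hx]
      exact tail _ measurableSet_Ioi
  have wabs : ∀ x, w |x| = w x := fun x => by
    rcases abs_choice x with h | h <;> rw [h]
    exact gaussianPDFReal_neg_arg x
  have fbd : ∀ x, |I x / w x| ≤ 2 * C * M := by
    intro x
    rw [abs_div, abs_of_pos (wpos x), div_le_iff₀ (wpos x)]
    have h1 := hC |x| (abs_nonneg x)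
    rw [wabs] at h1
    have := mul_le_mul_of_nonneg_left h1 (by linarith : 0 ≤ 2 * M)
    linarith [Ibd x]
  have xfbd : ∀ x, |x * (I x / w x)| ≤ 2 * M := by
    intro x
    rw [mul_div_assoc', abs_div, abs_of_pos (wpos x), div_le_iff₀ (wpos x), abs_mul]
    have h1 := mul_integral_Ioi_gaussianPDFReal_le (x := |x|)
    rw [← hw, wabs] at h1
    calc |x| * |I x| ≤ |x| * (2 * M * ∫ y in Set.Ioi |x|, w y) :=
          mul_le_mul_of_nonneg_left (Ibd x) (abs_nonneg x)
      _ = 2 * M * (|x| * ∫ y in Set.Ioi |x|, w y) := by ring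
      _ ≤ _ := mul_le_mul_of_nonneg_left h1 (by linarith)
  have fder : ∀ x, HasDerivAt (fun x => I x / w x) (x * (I x / w x) + k x) x := by
    intro x
    refine ((Ider x).div (hasDerivAt_gaussianPDFReal x) (wpos x).ne').congr_deriv ?_
    have := (wpos x).ne'
    rw [← hw]
    field_simp
    ring
  refine ⟨fun x => I x / w x, fun x => x * (I x / w x) + k x, ?_, fder, fun x => by
    simp [hk], fun x => ?_, fun x => ?_⟩
  · have : Continuous fun x => I x / w x :=
      continuous_iff_continuousAt.2 fun x => (fder x).continuousAt
    exact (continuous_id.mul this).add kcont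
  · refine (fbd x).trans ?_
    nlinarith
  · have := abs_add_le (x * (I x / w x)) (k x)
    have h1 := xfbd x
    have h2 := kM x
    have : M * 1 ≤ M * C := mul_le_mul_of_nonneg_left hC1 hM0
    linarith

/-! ### Gaussian integration by parts -/

/-- The standard Gaussian law on `Fin n → ℝ`. -/
abbrev stdGaussianPi (n : ℕ) : Measure (Fin n → ℝ) :=
  Measure.pi fun _ => gaussianReal 0 1

lemma integral_mul_gaussianReal_eq_integral_deriv {h h' : ℝ → ℝ}
    (hd : ∀ x, HasDerivAt h (h' x) x) (hi : Integrable h (gaussianReal 0 1))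
    (hi' : Integrable h' (gaussianReal 0 1))
    (hxi : Integrable (fun x => x * h x) (gaussianReal 0 1)) :
    ∫ x, x * h x ∂(gaussianReal 0 1) = ∫ x, h' x ∂(gaussianReal 0 1) := by
  have conv : ∀ g : ℝ → ℝ, Integrable g (gaussianReal 0 1) →
      Integrable (fun x => g x * gaussianPDFReal 0 1 x) := by
    intro g hg
    rw [gaussianReal_of_var_ne_zero 0 one_ne_zero,
      integrable_withDensity_iff (measurable_gaussianPDF 0 1)
        (Eventually.of_forall fun x => gaussianPDF_lt_top)] at hg
    simpa using hg
  have h1 := integral_mul_deriv_eq_deriv_mul_of_integrable (u := h) (u' := h')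
    (v := gaussianPDFReal 0 1) (v' := fun x => -x * gaussianPDFReal 0 1 x)
    (fun x _ => hd x) (fun x _ => hasDerivAt_gaussianPDFReal x)
    ((conv _ hxi).neg.congr (Eventually.of_forall fun x => by simp; ring))
    (conv _ hi') (conv _ hi)
  rw [integral_gaussianReal_eq_integral_smul one_ne_zero,
    integral_gaussianReal_eq_integral_smul one_ne_zero]
  simp only [smul_eq_mul]
  have h2 : ∀ x : ℝ, gaussianPDFReal 0 1 x * (x * h x) =
      -(h x * (-x * gaussianPDFReal 0 1 x)) := fun x => by ring
  have h3 : ∀ x : ℝ, gaussianPDFReal 0 1 x * h' x = h' x * gaussianPDFReal 0 1 x :=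
    fun x => by ring
  simp_rw [h2, h3]
  rw [integral_neg, h1, neg_neg]

lemma integral_eval_mul_stdGaussianPi {n : ℕ} (i : Fin n) {h h' : (Fin n → ℝ) → ℝ}
    (hd : ∀ x, HasDerivAt (fun t => h (Function.update x i t)) (h' x) (x i))
    (hi : Integrable h (stdGaussianPi n)) (hi' : Integrable h' (stdGaussianPi n))
    (hxi : Integrable (fun x => x i * h x) (stdGaussianPi n)) :
    ∫ x, x i * h x ∂(stdGaussianPi n) = ∫ x, h' x ∂(stdGaussianPi n) := by
  obtain _ | m := n
  · exact i.elim0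
  have mp := (measurePreserving_piFinSuccAbove
    (fun _ : Fin (m + 1) => gaussianReal 0 1) i).symm
  have conv : ∀ g : (Fin (m + 1) → ℝ) → ℝ, Integrable g (stdGaussianPi (m + 1)) →
      Integrable (fun p : ℝ × (Fin m → ℝ) => g (i.insertNth p.1 p.2))
        ((gaussianReal 0 1).prod (stdGaussianPi m)) := fun g hg =>
    (mp.integrable_comp_emb (MeasurableEquiv.measurableEmbedding _)).2 hg
  have conv' : ∀ g : (Fin (m + 1) → ℝ) → ℝ, Integrable g (stdGaussianPi (m + 1)) →
      ∫ x, g x ∂(stdGaussianPi (m + 1)) =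
        ∫ y, ∫ t, g (i.insertNth t y) ∂(gaussianReal 0 1) ∂(stdGaussianPi m) := by
    intro g hg
    have e := mp.integral_comp (MeasurableEquiv.measurableEmbedding _) g
    rw [← integral_prod_symm (fun p : ℝ × (Fin m → ℝ) => g (i.insertNth p.1 p.2)) (conv g hg)]
    exact e.symm
  rw [conv' _ hxi, conv' _ hi']
  refine integral_congr_ae ?_
  filter_upwards [(conv _ hi).prod_left_ae, (conv _ hi').prod_left_ae,
    (conv _ hxi).prod_left_ae] with y h1 h2 h3
  simp only [Fin.insertNth_apply_same] at h3 ⊢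
  refine integral_mul_gaussianReal_eq_integral_deriv (fun t => ?_) h1 h2 h3
  have := hd (i.insertNth t y)
  simpa using this

/-- Continuous functions of at most polynomial growth. -/
def PolyGrowth {n : ℕ} (X : (Fin n → ℝ) → ℝ) : Prop :=
  Continuous X ∧ ∃ (C : ℝ) (k : ℕ), ∀ x, |X x| ≤ C * (1 + ‖x‖) ^ k

namespace PolyGrowth

variable {n : ℕ} {X Y : (Fin n → ℝ) → ℝ}

lemma of_bounded (hX : Continuous X) {C : ℝ} (hC : ∀ x, |X x| ≤ C) : PolyGrowth X :=
  ⟨hX, C, 0, by simpa using hC⟩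

lemma const (c : ℝ) : PolyGrowth fun _ : Fin n → ℝ => c :=
  of_bounded continuous_const (C := |c|) fun _ => le_rfl

lemma eval (i : Fin n) : PolyGrowth fun x : Fin n → ℝ => x i :=
  ⟨continuous_apply i, 1, 1, fun x => by
    have := norm_le_pi_norm x i
    rw [Real.norm_eq_abs] at this
    linarith⟩

lemma add (hX : PolyGrowth X) (hY : PolyGrowth Y) : PolyGrowth fun x => X x + Y x := by
  obtain ⟨cX, C, k, hC⟩ := hX
  obtain ⟨cY, D, l, hD⟩ := hY
  refine ⟨cX.add cY, |C| + |D|, k + l, fun x => ?_⟩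
  have h1 : (1 : ℝ) ≤ 1 + ‖x‖ := by linarith [norm_nonneg x]
  have hk : (1 + ‖x‖) ^ k ≤ (1 + ‖x‖) ^ (k + l) := pow_le_pow_right₀ h1 (by omega)
  have hl : (1 + ‖x‖) ^ l ≤ (1 + ‖x‖) ^ (k + l) := pow_le_pow_right₀ h1 (by omega)
  have h2 : C * (1 + ‖x‖) ^ k ≤ |C| * (1 + ‖x‖) ^ (k + l) :=
    mul_le_mul (le_abs_self C) hk (by positivity) (abs_nonneg C)
  have h3 : D * (1 + ‖x‖) ^ l ≤ |D| * (1 + ‖x‖) ^ (k + l) :=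
    mul_le_mul (le_abs_self D) hl (by positivity) (abs_nonneg D)
  have := abs_add_le (X x) (Y x)
  have := hC x
  have := hD x
  rw [add_mul]
  linarith

lemma mul (hX : PolyGrowth X) (hY : PolyGrowth Y) : PolyGrowth fun x => X x * Y x := by
  obtain ⟨cX, C, k, hC⟩ := hX
  obtain ⟨cY, D, l, hD⟩ := hY
  refine ⟨cX.mul cY, C * D, k + l, fun x => ?_⟩
  rw [abs_mul, pow_add]
  calc |X x| * |Y x| ≤ (C * (1 + ‖x‖) ^ k) * (D * (1 + ‖x‖) ^ l) :=
        mul_le_mul (hC x) (hD x) (abs_nonneg _) ((abs_nonneg _).trans (hC x))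
    _ = _ := by ring

lemma pow (hX : PolyGrowth X) (k : ℕ) : PolyGrowth fun x => X x ^ k := by
  induction k with
  | zero => simpa using const 1
  | succ k ih => simpa only [pow_succ] using ih.mul hX

lemma const_mul (c : ℝ) (hX : PolyGrowth X) : PolyGrowth fun x => c * X x :=
  (const c).mul hX

lemma sub (hX : PolyGrowth X) (hY : PolyGrowth Y) : PolyGrowth fun x => X x - Y x := by
  simpa [sub_eq_add_neg] using hX.add (hY.const_mul (-1))

lemma sum {ι : Type*} (s : Finset ι) {X : ι → (Fin n → ℝ) → ℝ}
    (h : ∀ i ∈ s, PolyGrowth (X i)) : PolyGrowth fun x => ∑ i ∈ s, X i x := by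
  classical
  induction s using Finset.induction_on with
  | empty => simpa using const 0
  | insert a s ha ih =>
    simp only [Finset.sum_insert ha]
    exact (h a (Finset.mem_insert_self a s)).add
      (ih fun i hi => h i (Finset.mem_insert_of_mem hi))

lemma integrable (hX : PolyGrowth X) : Integrable X (stdGaussianPi n) := by
  obtain ⟨cX, C, k, hC⟩ := hX
  have h0 : ∀ i : Fin n, MemLp (fun x : Fin n → ℝ => x i) k (stdGaussianPi n) := fun i =>
    (memLp_id_gaussianReal' (μ := 0) (v := 1) (k : ℝ≥0∞) (by simp)).comp_measurePreserving
      (measurePreserving_eval (fun _ : Fin n => gaussianReal 0 1) i)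
  have h1 : MemLp (fun x : Fin n → ℝ => 1 + ∑ i, ‖x i‖) k (stdGaussianPi n) :=
    (memLp_const (1 : ℝ)).add (memLp_finsetSum Finset.univ fun i _ => (h0 i).norm)
  have h2 : Integrable (fun x : Fin n → ℝ => ‖1 + ∑ i, ‖x i‖‖ ^ k) (stdGaussianPi n) :=
    h1.integrable_norm_pow'
  have h3 : Integrable (fun x : Fin n → ℝ => |C| * ‖1 + ∑ i, ‖x i‖‖ ^ k) (stdGaussianPi n) :=
    h2.const_mul |C|
  refine h3.mono' cX.aestronglyMeasurable (Eventually.of_forall fun x => ?_)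
  have hx : ‖x‖ ≤ ∑ i, ‖x i‖ := by
    refine (pi_norm_le_iff_of_nonneg (Finset.sum_nonneg fun i _ => norm_nonneg _)).2 fun i => ?_
    exact Finset.single_le_sum (f := fun i => ‖x i‖) (fun i _ => norm_nonneg _)
      (Finset.mem_univ i)
  refine (hC x).trans ?_
  rw [Real.norm_of_nonneg (by positivity : 0 ≤ 1 + ∑ i, ‖x i‖)]
  have := norm_nonneg x
  gcongr
  exact le_abs_self C

end PolyGrowth

/-! ### Diagonal quadratic forms in independent standard Gaussian variables -/

/-- The centered diagonal quadratic form `∑ β_i (x_i² − 1)`. -/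
def quadForm {n : ℕ} (β : Fin n → ℝ) (x : Fin n → ℝ) : ℝ := ∑ i, β i * (x i ^ 2 - 1)

section QuadForm

variable {n : ℕ} (α β γ : Fin n → ℝ)

lemma PolyGrowth.quadForm : PolyGrowth (quadForm β) :=
  PolyGrowth.sum _ fun i _ => (((PolyGrowth.eval i).pow 2).sub (PolyGrowth.const 1)).const_mul _

lemma continuous_quadForm : Continuous (quadForm β) := (PolyGrowth.quadForm β).1

lemma hasDerivAt_quadForm_update (i : Fin n) (x : Fin n → ℝ) :
    HasDerivAt (fun t => quadForm β (Function.update x i t)) (x i * (2 * β i)) (x i) := by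
  have h : ∀ j, HasDerivAt (fun t => β j * (Function.update x i t j ^ 2 - 1))
      (if j = i then x i * (2 * β i) else 0) (x i) := by
    intro j
    by_cases hj : j = i
    · subst hj
      simp only [Function.update_self, if_true]
      exact ((((hasDerivAt_id (x j)).pow 2).sub_const 1).const_mul (β j)).congr_deriv
        (by simp; ring)
    · simp only [Function.update_of_ne hj, if_neg hj]
      exact hasDerivAt_const _ _
  have := HasDerivAt.fun_sum (u := Finset.univ) fun j _ => h j
  simpa [quadForm] using this

/-- Integration by parts against a diagonal quadratic form. -/
lemma integral_quadForm_mul {ψ : (Fin n → ℝ) → ℝ} {D : Fin n → (Fin n → ℝ) → ℝ}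
    (hψ : PolyGrowth ψ) (hD : ∀ i, PolyGrowth (D i))
    (hd : ∀ i x, HasDerivAt (fun t => ψ (Function.update x i t)) (x i * D i x) (x i)) :
    ∫ x, quadForm β x * ψ x ∂(stdGaussianPi n) =
      ∫ x, ∑ i, β i * (x i ^ 2 * D i x) ∂(stdGaussianPi n) := by
  have e : ∀ i : Fin n, PolyGrowth fun x : Fin n → ℝ => x i := PolyGrowth.eval
  have key : ∀ i, ∫ x, x i * (x i * ψ x) ∂(stdGaussianPi n) =
      ∫ x, ψ x + x i * (x i * D i x) ∂(stdGaussianPi n) := by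
    intro i
    refine integral_eval_mul_stdGaussianPi i (fun x => ?_) ((e i).mul hψ).integrable
      (hψ.add ((e i).mul ((e i).mul (hD i)))).integrable
      ((e i).mul ((e i).mul hψ)).integrable
    have := (hasDerivAt_id (x i)).mul (hd i x)
    simp only [Function.update_self]
    exact this.congr_deriv (by simp)
  have h1 : ∀ x, quadForm β x * ψ x = ∑ i, β i * (x i * (x i * ψ x) - ψ x) := fun x => by
    rw [quadForm, Finset.sum_mul]
    exact Finset.sum_congr rfl fun i _ => by ring
  simp_rw [h1]
  rw [integral_finsetSum _ fun i _ => ((((e i).mul ((e i).mul hψ)).sub hψ).const_mul _).integrable,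
    integral_finsetSum _ fun i _ => ((((e i).pow 2).mul (hD i)).const_mul _).integrable]
  refine Finset.sum_congr rfl fun i _ => ?_
  rw [integral_const_mul, integral_const_mul,
    integral_sub ((e i).mul ((e i).mul hψ)).integrable hψ.integrable, key i,
    integral_add hψ.integrable ((e i).mul ((e i).mul (hD i))).integrable, add_sub_cancel_left]
  simp only [pow_two, mul_assoc]

lemma sum_mul_sq_mul (y : ℝ) (x : Fin n → ℝ) :
    ∑ i, β i * (x i ^ 2 * (2 * α i * y)) =
      2 * (y * quadForm (β * α) x) + 2 * (∑ i, β i * α i) * y := by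
  simp only [quadForm, Finset.mul_sum, Finset.sum_mul, ← Finset.sum_add_distrib, Pi.mul_apply]
  exact Finset.sum_congr rfl fun i _ => by ring

variable {α β γ}

lemma integral_quadForm_mul_comp {p p' : ℝ → ℝ} (hp : ∀ x, HasDerivAt p (p' x) x)
    (h : PolyGrowth fun x => p (quadForm α x)) (h' : PolyGrowth fun x => p' (quadForm α x)) :
    ∫ x, quadForm β x * p (quadForm α x) ∂(stdGaussianPi n) =
      2 * ∫ x, p' (quadForm α x) * quadForm (β * α) x ∂(stdGaussianPi n) +
        2 * (∑ i, β i * α i) * ∫ x, p' (quadForm α x) ∂(stdGaussianPi n) := by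
  rw [integral_quadForm_mul β (D := fun i x => 2 * α i * p' (quadForm α x)) h
    (fun i => h'.const_mul _) fun i x => ?_]
  · simp_rw [sum_mul_sq_mul]
    rw [integral_add ((h'.mul (PolyGrowth.quadForm _)).const_mul _).integrable
      (h'.const_mul _).integrable, integral_const_mul, integral_const_mul]
  · have := (hp (quadForm α (Function.update x i (x i)))).comp (x i)
      (hasDerivAt_quadForm_update α i x)
    rw [Function.update_eq_self] at this
    exact this.congr_deriv (by ring)

lemma integral_quadForm_mul_quadForm_mul_comp {p p' : ℝ → ℝ}
    (hp : ∀ x, HasDerivAt p (p' x) x)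
    (h : PolyGrowth fun x => p (quadForm α x)) (h' : PolyGrowth fun x => p' (quadForm α x)) :
    ∫ x, quadForm β x * (quadForm γ x * p (quadForm α x)) ∂(stdGaussianPi n) =
      2 * ∫ x, p (quadForm α x) * quadForm (β * γ) x ∂(stdGaussianPi n) +
        2 * (∑ i, β i * γ i) * ∫ x, p (quadForm α x) ∂(stdGaussianPi n) +
      (2 * ∫ x, quadForm γ x * p' (quadForm α x) * quadForm (β * α) x ∂(stdGaussianPi n) +
        2 * (∑ i, β i * α i) * ∫ x, quadForm γ x * p' (quadForm α x) ∂(stdGaussianPi n)) := by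
  have g := PolyGrowth.quadForm γ
  rw [integral_quadForm_mul β (D := fun i x => 2 * γ i * p (quadForm α x) +
    2 * α i * (quadForm γ x * p' (quadForm α x))) (g.mul h)
    (fun i => (h.const_mul _).add ((g.mul h').const_mul _)) fun i x => ?_]
  · simp_rw [mul_add, Finset.sum_add_distrib, sum_mul_sq_mul]
    rw [integral_add, integral_add, integral_add]
    · simp only [integral_const_mul]
    · exact (((g.mul h').mul (PolyGrowth.quadForm _)).const_mul _).integrable
    · exact ((g.mul h').const_mul _).integrable
    · exact ((h.mul (PolyGrowth.quadForm _)).const_mul _).integrable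
    · exact (h.const_mul _).integrable
    · exact (((h.mul (PolyGrowth.quadForm _)).const_mul _).add (h.const_mul _)).integrable
    · exact ((((g.mul h').mul (PolyGrowth.quadForm _)).const_mul _).add
        ((g.mul h').const_mul _)).integrable
  · have h1 := (hp (quadForm α (Function.update x i (x i)))).comp (x i)
      (hasDerivAt_quadForm_update α i x)
    have := (hasDerivAt_quadForm_update γ i x).mul h1
    simp only [Function.update_eq_self, Function.comp_apply] at this
    exact this.congr_deriv (by ring)

lemma integral_quadForm : ∫ x, quadForm β x ∂(stdGaussianPi n) = 0 := by
  have := integral_quadForm_mul_comp (α := 0) (β := β) (p := fun _ => 1) (p' := fun _ => 0)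
    (fun x => hasDerivAt_const x 1) (PolyGrowth.const 1) (PolyGrowth.const 0)
  simpa using this

lemma integral_quadForm_mul_quadForm :
    ∫ x, quadForm β x * quadForm α x ∂(stdGaussianPi n) = 2 * ∑ i, β i * α i := by
  have := integral_quadForm_mul_comp (α := α) (β := β) (p := id) (p' := fun _ => 1)
    (fun x => hasDerivAt_id x) (PolyGrowth.quadForm α) (PolyGrowth.const 1)
  simpa [integral_quadForm] using this

lemma integral_quadForm_mul_sq :
    ∫ x, quadForm β x * quadForm α x ^ 2 ∂(stdGaussianPi n) = 8 * ∑ i, β i * α i ^ 2 := by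
  have h := PolyGrowth.quadForm α
  have := integral_quadForm_mul_comp (α := α) (β := β) (p := fun x => x ^ 2)
    (p' := fun x => 2 * x) (fun x => by simpa using hasDerivAt_pow 2 x) (h.pow 2) (h.const_mul 2)
  rw [this]
  simp_rw [mul_assoc, mul_comm (quadForm α _)]
  rw [integral_const_mul, integral_const_mul, integral_quadForm_mul_quadForm, integral_quadForm]
  simp only [Pi.mul_apply, pow_two, mul_assoc]
  ring

lemma integral_quadForm_mul_cube :
    ∫ x, quadForm β x * quadForm α x ^ 3 ∂(stdGaussianPi n) =
      48 * ∑ i, β i * α i ^ 3 + 12 * (∑ i, β i * α i) * ∑ i, α i ^ 2 := by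
  have h := PolyGrowth.quadForm α
  have := integral_quadForm_mul_comp (α := α) (β := β) (p := fun x => x ^ 3)
    (p' := fun x => 3 * x ^ 2) (fun x => by simpa using hasDerivAt_pow 3 x) (h.pow 3)
    ((h.pow 2).const_mul 3)
  rw [this]
  have e1 : ∀ x, 3 * quadForm α x ^ 2 * quadForm (β * α) x =
    3 * (quadForm (β * α) x * quadForm α x ^ 2) := fun x => by ring
  have e2 : ∀ x, quadForm α x ^ 2 = quadForm α x * quadForm α x := fun x => by ring
  simp_rw [e1]
  rw [integral_const_mul, integral_const_mul, integral_quadForm_mul_sq]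
  simp_rw [e2]
  rw [integral_quadForm_mul_quadForm]
  have e3 : ∑ i, (β * α) i * α i ^ 2 = ∑ i, β i * α i ^ 3 :=
    Finset.sum_congr rfl fun i _ => by simp only [Pi.mul_apply]; ring
  have e4 : ∑ i, α i * α i = ∑ i, α i ^ 2 :=
    Finset.sum_congr rfl fun i _ => by ring
  rw [e3, e4]
  ring

/-- Stein's identity in the second chaos. -/
lemma integral_stein_quadForm (hα : ∑ i, α i ^ 2 = 1 / 2) {f f' : ℝ → ℝ}
    (hf : ∀ x, HasDerivAt f (f' x) x)
    (h : PolyGrowth fun x => f (quadForm α x)) (h' : PolyGrowth fun x => f' (quadForm α x)) :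
    ∫ x, (f' (quadForm α x) - quadForm α x * f (quadForm α x)) ∂(stdGaussianPi n) =
      -2 * ∫ x, f' (quadForm α x) * quadForm (α * α) x ∂(stdGaussianPi n) := by
  rw [integral_sub h'.integrable ((PolyGrowth.quadForm α).mul h).integrable,
    integral_quadForm_mul_comp hf h h']
  simp only [← pow_two, hα]
  ring

/-- A second application of integration by parts to the error term in Stein's identity. -/
lemma integral_quadForm_mul_stein (hα : ∑ i, α i ^ 2 = 1 / 2) {f f' : ℝ → ℝ}
    (hf : ∀ x, HasDerivAt f (f' x) x)
    (h : PolyGrowth fun x => f (quadForm α x)) (h' : PolyGrowth fun x => f' (quadForm α x)) :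
    ∫ x, quadForm α x * (quadForm (α * α) x * f (quadForm α x)) ∂(stdGaussianPi n) =
      2 * ∫ x, f (quadForm α x) * quadForm (α * (α * α)) x ∂(stdGaussianPi n) +
        2 * (∑ i, α i ^ 3) * ∫ x, f (quadForm α x) ∂(stdGaussianPi n) +
      2 * ∫ x, f' (quadForm α x) * quadForm (α * α) x ^ 2 ∂(stdGaussianPi n) +
        ∫ x, f' (quadForm α x) * quadForm (α * α) x ∂(stdGaussianPi n) := by
  rw [integral_quadForm_mul_quadForm_mul_comp hf h h']
  have e1 : ∑ i, α i * (α * α) i = ∑ i, α i ^ 3 :=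
    Finset.sum_congr rfl fun i _ => by simp only [Pi.mul_apply]; ring
  have e2 : ∀ x, quadForm (α * α) x * f' (quadForm α x) * quadForm (α * α) x =
      f' (quadForm α x) * quadForm (α * α) x ^ 2 := fun x => by ring
  have e3 : ∀ x, quadForm (α * α) x * f' (quadForm α x) =
      f' (quadForm α x) * quadForm (α * α) x := fun x => by ring
  have e4 : ∑ i, α i * α i = 1 / 2 := by simpa only [pow_two] using hα
  simp_rw [e2, e3]
  rw [e1, e4]
  ring

lemma integral_quadForm_sq_sq :
    ∫ x, quadForm (α * α) x ^ 2 ∂(stdGaussianPi n) = 2 * ∑ i, α i ^ 4 := by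
  simp_rw [pow_two (quadForm _ _)]
  rw [integral_quadForm_mul_quadForm]
  congr 1
  exact Finset.sum_congr rfl fun i _ => by simp only [Pi.mul_apply]; ring

lemma sum_pow_four_le_sum_pow_three (h0 : ∀ i, 0 ≤ α i) (hα : ∑ i, α i ^ 2 = 1 / 2) :
    ∑ i, α i ^ 4 ≤ ∑ i, α i ^ 3 := by
  refine Finset.sum_le_sum fun i _ => ?_
  have h1 : α i ^ 2 ≤ 1 / 2 := by
    rw [← hα]
    exact Finset.single_le_sum (f := fun i => α i ^ 2) (fun i _ => sq_nonneg _)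
      (Finset.mem_univ i)
  have h2 : α i ≤ 1 := by nlinarith [h0 i]
  exact pow_le_pow_of_le_one (h0 i) h2 (by norm_num)

/-- A bound for integrals of a bounded function against a nonnegative one. -/
lemma abs_integral_mul_le {X Y W : (Fin n → ℝ) → ℝ} {C : ℝ} (hX : PolyGrowth X)
    (hXC : ∀ x, |X x| ≤ C) (hY : PolyGrowth Y) (hW : PolyGrowth W) (hYW : ∀ x, |Y x| ≤ W x) :
    |∫ x, X x * Y x ∂(stdGaussianPi n)| ≤ C * ∫ x, W x ∂(stdGaussianPi n) := by
  rw [← integral_const_mul, ← Real.norm_eq_abs]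
  refine (norm_integral_le_integral_norm _).trans ?_
  refine integral_mono (hX.mul hY).integrable.norm (hW.const_mul C).integrable fun x => ?_
  simp only [norm_mul, Real.norm_eq_abs]
  exact mul_le_mul (hXC x) (hYW x) (abs_nonneg _) ((abs_nonneg _).trans (hXC x))

end QuadForm

/-! ### Total variation bounds for diagonal quadratic forms -/

section Bounds

variable {n : ℕ} {α : Fin n → ℝ}

instance isProbabilityMeasure_map_quadForm :
    IsProbabilityMeasure ((stdGaussianPi n).map (quadForm α)) :=
  Measure.isProbabilityMeasure_map (continuous_quadForm α).aemeasurable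

lemma integral_map_quadForm {h : ℝ → ℝ} (hh : Measurable h) :
    ∫ x, h x ∂((stdGaussianPi n).map (quadForm α)) =
      ∫ x, h (quadForm α x) ∂(stdGaussianPi n) :=
  integral_map (continuous_quadForm α).aemeasurable hh.aestronglyMeasurable

lemma exists_dTV_map_quadForm_le : ∃ C : ℝ, 0 < C ∧ ∀ (n : ℕ) (α : Fin n → ℝ),
    (∀ i, 0 ≤ α i) → ∑ i, α i ^ 2 = 1 / 2 →
      dTV ((stdGaussianPi n).map (quadForm α)) (gaussianReal 0 1) ≤ C * ∑ i, α i ^ 3 := by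
  obtain ⟨C, hC, stein⟩ := exists_stein_solution
  refine ⟨20 * C ^ 2, by positivity, fun n α h0 hα => ?_⟩
  refine dTV_le_of_continuous _ _ fun h hc hn h1 => ?_
  obtain ⟨f, f', f'c, fd, fs, fb, f'b⟩ := stein h 1 hc fun x => abs_le.2 ⟨by linarith [hn x], h1 x⟩
  obtain ⟨φ, φ', φ'c, φd, φs, φb, φ'b⟩ := stein f' (C * 1) f'c f'b
  have qc := continuous_quadForm α
  have fc : Continuous f := continuous_iff_continuousAt.2 fun x => (fd x).continuousAt
  have φc : Continuous φ := continuous_iff_continuousAt.2 fun x => (φd x).continuousAt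
  have pf : PolyGrowth fun x => f (quadForm α x) := .of_bounded (fc.comp qc) fun x => fb _
  have pf' : PolyGrowth fun x => f' (quadForm α x) := .of_bounded (f'c.comp qc) fun x => f'b _
  have pφ : PolyGrowth fun x => φ (quadForm α x) := .of_bounded (φc.comp qc) fun x => φb _
  have pφ' : PolyGrowth fun x => φ' (quadForm α x) := .of_bounded (φ'c.comp qc) fun x => φ'b _
  have pq := PolyGrowth.quadForm α
  have pq2 := PolyGrowth.quadForm (α * α)
  have pq3 := PolyGrowth.quadForm (α * (α * α))
  set m := ∫ y, h y ∂(gaussianReal 0 1)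
  set m' := ∫ y, f' y ∂(gaussianReal 0 1)
  have ph : PolyGrowth fun x => h (quadForm α x) :=
    .of_bounded (hc.comp qc) (C := 1) fun x => abs_le.2 ⟨by linarith [hn (quadForm α x)], h1 _⟩
  have e1 : (∫ x, h x ∂((stdGaussianPi n).map (quadForm α))) - m =
      -2 * ∫ x, f' (quadForm α x) * quadForm (α * α) x ∂(stdGaussianPi n) := by
    rw [integral_map_quadForm hc.measurable, ← integral_stein_quadForm hα fd pf pf']
    simp_rw [fs]
    rw [integral_sub ph.integrable (integrable_const _)]
    simp
  have e2 : ∫ x, f' (quadForm α x) * quadForm (α * α) x ∂(stdGaussianPi n) =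
      ∫ x, φ' (quadForm α x) * quadForm (α * α) x ∂(stdGaussianPi n) -
      ∫ x, quadForm α x * (quadForm (α * α) x * φ (quadForm α x)) ∂(stdGaussianPi n) := by
    have : ∀ x, f' (quadForm α x) * quadForm (α * α) x =
        φ' (quadForm α x) * quadForm (α * α) x -
        quadForm α x * (quadForm (α * α) x * φ (quadForm α x)) +
          m' * quadForm (α * α) x := fun x => by
      have := φs (quadForm α x)
      linear_combination -(quadForm (α * α) x) * this
    simp_rw [this]
    rw [integral_add ((pφ'.mul pq2).sub (pq.mul (pq2.mul pφ))).integrable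
      (pq2.const_mul _).integrable, integral_sub (pφ'.mul pq2).integrable
      (pq.mul (pq2.mul pφ)).integrable, integral_const_mul, integral_quadForm]
    ring
  rw [integral_quadForm_mul_stein hα φd pφ pφ'] at e2
  have b1 := abs_integral_mul_le (W := fun x => quadForm (α * (α * α)) x + 2 * ∑ i, α i ^ 3)
    pφ (fun x => φb _) pq3 (pq3.add (.const _)) fun x => by
      simp only [quadForm, Finset.mul_sum, ← Finset.sum_add_distrib]
      refine (Finset.abs_sum_le_sum_abs _ _).trans (Finset.sum_le_sum fun i _ => ?_)
      have h3 := pow_nonneg (h0 i) 3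
      have : (α * (α * α)) i = α i ^ 3 := by simp only [Pi.mul_apply]; ring
      rw [this, abs_le]
      constructor <;> nlinarith [mul_nonneg h3 (sq_nonneg (x i))]
  have b2 := abs_integral_mul_le (W := fun x => 1)
    pφ (fun x => φb _) (.const 1) (.const 1) (fun x => by simp)
  have b3 := abs_integral_mul_le (W := fun x => quadForm (α * α) x ^ 2)
    pφ' (fun x => φ'b _) (pq2.pow 2) (pq2.pow 2) (fun x => by simp)
  rw [integral_quadForm_sq_sq] at b3
  rw [integral_add pq3.integrable (integrable_const _), integral_quadForm] at b1
  simp only [mul_one, integral_const, probReal_univ, smul_eq_mul, one_mul, zero_add] at b1 b2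
  have s34 := sum_pow_four_le_sum_pow_three h0 hα
  have s3 : 0 ≤ ∑ i, α i ^ 3 := Finset.sum_nonneg fun i _ => pow_nonneg (h0 i) 3
  rw [e1, e2]
  set a := ∫ x, φ (quadForm α x) * quadForm (α * (α * α)) x ∂(stdGaussianPi n)
  set b := ∫ x, φ (quadForm α x) ∂(stdGaussianPi n)
  set c := ∫ x, φ' (quadForm α x) * quadForm (α * α) x ^ 2 ∂(stdGaussianPi n)
  set S := ∑ i, α i ^ 3
  set S4 := ∑ i, α i ^ 4
  have hb : |S * b| ≤ S * (C * C) := by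
    rw [abs_mul, abs_of_nonneg s3]
    gcongr
  have hc' : |c| ≤ C * C * (2 * S) := by
    refine b3.trans ?_
    rw [mul_one]
    gcongr
  rw [abs_le] at *
  constructor <;> nlinarith

lemma le_dTV_map_quadForm (h0 : ∀ i, 0 ≤ α i) (hα : ∑ i, α i ^ 2 = 1 / 2) :
    (∑ i, α i ^ 3) / 4 - 2 * ∑ i, α i ^ 4 ≤
      dTV ((stdGaussianPi n).map (quadForm α)) (gaussianReal 0 1) := by
  set φ : ℝ → ℝ := fun x => Real.exp (-(x ^ 2 / 2)) with hφ
  set φ' : ℝ → ℝ := fun x => -(x * Real.exp (-(x ^ 2 / 2))) with hφ'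
  have φd : ∀ x, HasDerivAt φ (φ' x) x := fun x => by
    have := ((hasDerivAt_pow 2 x).div_const 2).fun_neg.exp
    refine this.congr_deriv ?_
    simp only [hφ']
    push_cast
    ring
  have φc : Continuous φ := by fun_prop
  have φ'c : Continuous φ' := by fun_prop
  have φ1 : ∀ x, |φ x| ≤ 1 := fun x => by
    rw [abs_of_pos (Real.exp_pos _), Real.exp_le_one_iff]
    nlinarith [sq_nonneg x]
  have φ'1 : ∀ x, |φ' x| ≤ 1 := fun x => by
    simp only [hφ', abs_neg, abs_mul, abs_of_pos (Real.exp_pos _)]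
    rw [Real.exp_neg, ← div_eq_mul_inv, div_le_one (Real.exp_pos _)]
    have := Real.add_one_le_exp (x ^ 2 / 2)
    nlinarith [sq_nonneg (|x| - 1), sq_abs x]
  have qc := continuous_quadForm α
  have pφ : PolyGrowth fun x => φ (quadForm α x) := .of_bounded (φc.comp qc) fun x => φ1 _
  have pφ' : PolyGrowth fun x => φ' (quadForm α x) := .of_bounded (φ'c.comp qc) fun x => φ'1 _
  have pq := PolyGrowth.quadForm α
  have pq2 := PolyGrowth.quadForm (α * α)
  have pq3 := PolyGrowth.quadForm (α * (α * α))
  have pq4 := PolyGrowth.quadForm (α * (α * α) * α)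
  have e0 : ∫ x, φ' x ∂(gaussianReal 0 1) = 0 := by
    have hs : (gaussianReal 0 1).map (fun x => -x) = gaussianReal 0 1 := by
      rw [gaussianReal_map_neg, neg_zero]
    have h1 : ∫ x, φ' (-x) ∂(gaussianReal 0 1) = ∫ x, φ' x ∂(gaussianReal 0 1) := by
      conv_rhs => rw [← hs, integral_map (by fun_prop) φ'c.aestronglyMeasurable]
    have h2 : ∀ x, φ' (-x) = -φ' x := fun x => by simp [hφ']
    simp_rw [h2, integral_neg] at h1
    linarith
  set y := -∫ x, φ' (quadForm α x) * quadForm (α * α) x ∂(stdGaussianPi n) with hy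
  have e1 : ∫ x, φ' (quadForm α x) ∂(stdGaussianPi n) = y := by
    have := integral_stein_quadForm hα φd pφ pφ'
    have h2 : ∀ x, φ' x - x * φ x = 2 * φ' x := fun x => by simp only [hφ, hφ']; ring
    simp_rw [h2] at this
    rw [integral_const_mul] at this
    linarith
  have e2 := integral_quadForm_mul_stein hα φd pφ pφ'
  have e3 : ∫ x, quadForm α x * (quadForm (α * α) x * φ (quadForm α x)) ∂(stdGaussianPi n) = y := by
    rw [hy, ← integral_neg]
    refine integral_congr_ae (Eventually.of_forall fun x => ?_)
    simp only [hφ, hφ']; ring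
  have b1 : |∫ x, φ (quadForm α x) * quadForm (α * (α * α)) x ∂(stdGaussianPi n)| ≤
      2 * ∑ i, α i ^ 4 := by
    have h1 := integral_quadForm_mul_comp (β := α * (α * α)) φd pφ pφ'
    have h4 : ∑ i, (α * (α * α)) i * α i = ∑ i, α i ^ 4 :=
      Finset.sum_congr rfl fun i _ => by simp only [Pi.mul_apply]; ring
    have h2 : ∫ x, φ (quadForm α x) * quadForm (α * (α * α)) x ∂(stdGaussianPi n) =
        2 * ∫ x, φ' (quadForm α x) * (quadForm (α * (α * α) * α) x + ∑ i, α i ^ 4)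
          ∂(stdGaussianPi n) := by
      simp_rw [mul_comm (φ _), h1, mul_add]
      rw [integral_add (pφ'.mul pq4).integrable (pφ'.mul (.const _)).integrable,
        integral_mul_const, h4]
      ring
    have h3 := abs_integral_mul_le (W := fun x => quadForm (α * (α * α) * α) x + ∑ i, α i ^ 4)
      pφ' (fun x => φ'1 _) (pq4.add (.const _)) (pq4.add (.const _)) fun x => by
        refine (abs_of_nonneg ?_).le
        simp only [quadForm, ← Finset.sum_add_distrib]
        refine Finset.sum_nonneg fun i _ => ?_
        have h5 : (α * (α * α) * α) i = α i ^ 4 := by simp only [Pi.mul_apply]; ring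
        rw [h5]
        nlinarith [mul_nonneg (pow_nonneg (h0 i) 4) (sq_nonneg (x i))]
    rw [integral_add pq4.integrable (integrable_const _), integral_quadForm] at h3
    simp only [integral_const, probReal_univ, smul_eq_mul, one_mul, zero_add] at h3
    rw [h2, abs_mul, abs_two]
    linarith
  have b2 : 1 / 2 ≤ ∫ x, φ (quadForm α x) ∂(stdGaussianPi n) := by
    have h1 : ∫ x, (1 - 1 / 2 * (quadForm α x * quadForm α x)) ∂(stdGaussianPi n) = 1 / 2 := by
      rw [integral_sub (integrable_const _) ((pq.mul pq).const_mul _).integrable,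
        integral_const_mul, integral_quadForm_mul_quadForm]
      simp only [← pow_two, hα, integral_const, probReal_univ, smul_eq_mul]
      norm_num
    rw [← h1]
    refine integral_mono ((PolyGrowth.const 1).sub ((pq.mul pq).const_mul _)).integrable
      pφ.integrable fun x => ?_
    have := Real.add_one_le_exp (-(quadForm α x ^ 2 / 2))
    simp only [hφ]
    linarith
  have b3 := abs_integral_mul_le (W := fun x => quadForm (α * α) x ^ 2)
    pφ' (fun x => φ'1 _) (pq2.pow 2) (pq2.pow 2) (fun x => by simp)
  rw [integral_quadForm_sq_sq] at b3
  have s3 : 0 ≤ ∑ i, α i ^ 3 := Finset.sum_nonneg fun i _ => pow_nonneg (h0 i) 3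
  rw [e3] at e2
  have hyl : (∑ i, α i ^ 3) / 2 - 4 * ∑ i, α i ^ 4 ≤ y := by
    have := mul_le_mul_of_nonneg_left b2 s3
    have h1 := (abs_le.1 b1).1
    have h3 := (abs_le.1 b3).1
    linarith
  have tv := abs_integral_sub_le_dTV ((stdGaussianPi n).map (quadForm α)) (gaussianReal 0 1)
    (h := fun x => φ' x + 1) (φ'c.measurable.add_const 1) (M := 2)
    (fun x => by linarith [(abs_le.1 (φ'1 x)).1]) (fun x => by linarith [(abs_le.1 (φ'1 x)).2])
  have iφ : Integrable φ' (gaussianReal 0 1) := Integrable.of_bound φ'c.aestronglyMeasurable 1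
    (Eventually.of_forall φ'1)
  rw [integral_map_quadForm (φ'c.measurable.add_const 1),
    integral_add pφ'.integrable (integrable_const _), integral_add iφ (integrable_const _),
    e0, e1] at tv
  simp only [integral_const, probReal_univ, smul_eq_mul, mul_one, zero_add,
    add_sub_cancel_right] at tv
  have := le_abs_self y
  linarith

/-- The law of a nontrivial diagonal quadratic form is not standard Gaussian. -/
lemma dTV_map_quadForm_pos (hα : ∑ i, α i ^ 2 = 1 / 2) :
    0 < dTV ((stdGaussianPi n).map (quadForm α)) (gaussianReal 0 1) := by
  by_contra! hle
  have heq := eq_of_dTV_nonpos _ _ hle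
  have id_der : ∀ k : ℕ, ∀ x : ℝ, HasDerivAt (fun x : ℝ => x ^ (k + 1)) ((k + 1 : ℝ) * x ^ k) x :=
    fun k x => by simpa using hasDerivAt_pow (k + 1) x
  have int : ∀ k : ℕ, Integrable (fun x : ℝ => x ^ k) (gaussianReal 0 1) := fun k => by
    have := (memLp_id_gaussianReal' (μ := 0) (v := 1) (k : ℝ≥0∞) (by simp)).integrable_norm_pow'
    refine this.mono (continuous_pow k).aestronglyMeasurable (Eventually.of_forall fun x => ?_)
    simp
  have rec4 : ∀ k : ℕ, ∫ x, x ^ (k + 2) ∂(gaussianReal 0 1) =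
      (k + 1 : ℝ) * ∫ x, x ^ k ∂(gaussianReal 0 1) := fun k => by
    have e : ∀ x : ℝ, x ^ (k + 2) = x * x ^ (k + 1) := fun x => by ring
    rw [← integral_const_mul]
    simp_rw [e]
    refine integral_mul_gaussianReal_eq_integral_deriv (id_der k) (int _) ((int k).const_mul _) ?_
    simpa only [← e] using int (k + 2)
  have g4 : ∫ x, x ^ 4 ∂(gaussianReal 0 1) = 3 := by
    rw [rec4 2, rec4 0]
    norm_num
  have q4 : ∫ x, x ^ 4 ∂((stdGaussianPi n).map (quadForm α)) = 48 * ∑ i, α i ^ 4 + 3 := by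
    rw [integral_map_quadForm (by fun_prop)]
    have e : ∀ x, quadForm α x ^ 4 = quadForm α x * quadForm α x ^ 3 := fun x => by ring
    have e' : ∀ i, α i * α i ^ 3 = α i ^ 4 := fun i => by ring
    simp_rw [e]
    rw [integral_quadForm_mul_cube, hα]
    simp_rw [← pow_two, e', hα]
    norm_num
  rw [heq, g4] at q4
  have z4 : ∑ i, α i ^ 4 = 0 := by linarith
  have z : ∀ i, α i = 0 := fun i => by
    have := (Finset.sum_eq_zero_iff_of_nonneg fun i _ => by positivity).1 z4 i (Finset.mem_univ i)
    simpa using this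
  simp [z] at hα

end Bounds


lemma exists_orthogonal_diagonalization {n : ℕ} (A : Matrix (Fin n) (Fin n) ℝ)
    (hA : A.IsHermitian) :
    ∃ (v : Fin n → Fin n → ℝ) (l : Fin n → ℝ),
      (∀ x : Fin n → ℝ, ∑ i, (∑ k, v i k * x k) ^ 2 = ∑ k, x k ^ 2) ∧
      ∀ i j, ∑ k, ∑ m, v i k * v j m * A k m = if i = j then l i else 0 := by
  refine ⟨fun i k => hA.eigenvectorBasis i k, hA.eigenvalues, fun x => ?_, fun i j => ?_⟩
  · have := hA.eigenvectorBasis.sum_sq_norm_inner_right (WithLp.toLp 2 x)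
    rw [EuclideanSpace.norm_sq_eq] at this
    simpa [PiLp.inner_apply, mul_comm] using this
  · have h1 : ∀ k, ∑ m, A k m * hA.eigenvectorBasis j m =
        hA.eigenvalues j * hA.eigenvectorBasis j k := fun k => by
      have := congrFun (hA.mulVec_eigenvectorBasis j) k
      simpa [Matrix.mulVec, dotProduct] using this
    have h2 : ∑ k, hA.eigenvectorBasis i k * hA.eigenvectorBasis j k =
        if i = j then 1 else 0 := by
      have := orthonormal_iff_ite.1 hA.eigenvectorBasis.orthonormal i j
      simpa [PiLp.inner_apply, mul_comm] using this
    calc _ = ∑ k, hA.eigenvectorBasis i k * ∑ m, A k m * hA.eigenvectorBasis j m := by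
          refine Finset.sum_congr rfl fun k _ => ?_
          rw [Finset.mul_sum]
          exact Finset.sum_congr rfl fun m _ => by ring
      _ = hA.eigenvalues j * ∑ k, hA.eigenvectorBasis i k * hA.eigenvectorBasis j k := by
          rw [Finset.mul_sum]
          exact Finset.sum_congr rfl fun k _ => by rw [h1]; ring
      _ = _ := by
          rw [h2]
          split_ifs with h
          · rw [h, mul_one]
          · rw [mul_zero]

lemma map_eq_map_stdGaussianPi {Ω : Type*} [MeasurableSpace Ω] {P : Measure Ω}
    [IsProbabilityMeasure P] {n : ℕ}
    {Y : Fin n → Ω → ℝ} (hY : HasGaussianLaw (fun ω => (Y · ω)) P) (h0 : ∀ i, ∫ ω, Y i ω ∂P = 0)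
    (hcov : ∀ i j, i ≠ j → ∫ ω, Y i ω * Y j ω ∂P = 0) :
    P.map (fun ω => (Y · ω)) =
      (stdGaussianPi n).map fun x i => √(∫ ω, Y i ω ^ 2 ∂P) * x i := by
  have hYi : ∀ i, HasGaussianLaw (Y i) P := fun i => hY.eval i
  have hind : iIndepFun Y P := hY.iIndepFun_of_covariance_eq_zero fun i j hij => by
    simp [covariance, h0, hcov i j hij]
  rw [(iIndepFun_iff_map_fun_eq_pi_map fun i => (hYi i).aemeasurable).1 hind, stdGaussianPi,
    Measure.pi_map_pi fun i => by fun_prop]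
  congr 1
  funext i
  rw [(hYi i).map_eq_gaussianReal, gaussianReal_map_const_mul, h0 i,
    variance_of_integral_eq_zero (hYi i).aemeasurable (h0 i)]
  congr 1
  · simp
  · ext
    have h2 : 0 ≤ ∫ ω, Y i ω ^ 2 ∂P := integral_nonneg fun ω => sq_nonneg _
    simp [Real.sq_sqrt h2, h2]

lemma exists_map_sum_sq_eq {Ω : Type*} [MeasurableSpace Ω] {P : Measure Ω}
    [IsProbabilityMeasure P] {n : ℕ}
    {X : Fin n → Ω → ℝ} (hX : HasGaussianLaw (fun ω => (X · ω)) P)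
    (h0 : ∀ i, ∫ ω, X i ω ∂P = 0) :
    ∃ l : Fin n → ℝ, (∀ i, 0 ≤ l i) ∧ ∑ i, l i = ∑ i, ∫ ω, X i ω ^ 2 ∂P ∧
      P.map (fun ω => ∑ i, X i ω ^ 2) = (stdGaussianPi n).map fun x => ∑ i, l i * x i ^ 2 := by
  have hXi : ∀ i, HasGaussianLaw (X i) P := fun i => hX.eval i
  obtain ⟨v, l, hv, hl⟩ := exists_orthogonal_diagonalization
    (Matrix.of fun i j => ∫ ω, X i ω * X j ω ∂P)
    (by ext i j; simp [Matrix.conjTranspose_apply, mul_comm])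
  set Y : Fin n → Ω → ℝ := fun i ω => ∑ k, v i k * X k ω with hYdef
  have hY : HasGaussianLaw (fun ω => (Y · ω)) P :=
    hX.map_fun (ContinuousLinearMap.pi fun i =>
      ∑ k, v i k • ContinuousLinearMap.proj (R := ℝ) (φ := fun _ : Fin n => ℝ) k) |>.congr
      (.of_forall fun ω => by ext i; simp [hYdef])
  have hYi : ∀ i, HasGaussianLaw (Y i) P := fun i => hY.eval i
  have hY0 : ∀ i, ∫ ω, Y i ω ∂P = 0 := fun i => by
    rw [integral_finsetSum _ fun k _ => (hXi k).integrable.const_mul _]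
    simp [integral_const_mul, h0]
  have hint : ∀ k m, Integrable (fun ω => X k ω * X m ω) P := fun k m =>
    (hXi k).memLp_two.integrable_mul (hXi m).memLp_two
  have hYY : ∀ i j, ∫ ω, Y i ω * Y j ω ∂P = if i = j then l i else 0 := fun i j => by
    rw [← hl i j]
    have : ∀ ω, Y i ω * Y j ω = ∑ k, ∑ m, v i k * v j m * (X k ω * X m ω) := fun ω => by
      rw [hYdef]
      simp only [Finset.sum_mul_sum]
      exact Finset.sum_congr rfl fun k _ => Finset.sum_congr rfl fun m _ => by ring
    simp_rw [this]
    rw [integral_finsetSum _ fun k _ => integrable_finsetSum _ fun m _ => (hint k m).const_mul _]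
    refine Finset.sum_congr rfl fun k _ => ?_
    rw [integral_finsetSum _ fun m _ => (hint k m).const_mul _]
    exact Finset.sum_congr rfl fun m _ => by simp [integral_const_mul]
  have hY2 : ∀ i, ∫ ω, Y i ω ^ 2 ∂P = l i := fun i => by simpa [pow_two] using hYY i i
  have hl0 : ∀ i, 0 ≤ l i := fun i => by
    rw [← hY2]
    exact integral_nonneg fun ω => sq_nonneg _
  have hsum : ∀ ω, ∑ i, X i ω ^ 2 = ∑ i, Y i ω ^ 2 := fun ω => (hv _).symm
  refine ⟨l, hl0, ?_, ?_⟩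
  · rw [← integral_finsetSum _ fun i _ => (hXi i).memLp_two.integrable_sq]
    simp_rw [hsum]
    rw [integral_finsetSum _ fun i _ => (hYi i).memLp_two.integrable_sq]
    simp_rw [hY2]
  · have hlaw := map_eq_map_stdGaussianPi hY hY0 fun i j hij => by rw [hYY, if_neg hij]
    have hS : Measurable fun y : Fin n → ℝ => ∑ i, y i ^ 2 := by fun_prop
    have := congrArg (Measure.map fun y : Fin n → ℝ => ∑ i, y i ^ 2) hlaw
    rw [AEMeasurable.map_map_of_aemeasurable hS.aemeasurable hY.aemeasurable,
      Measure.map_map hS (by fun_prop)] at this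
    simp_rw [hsum]
    simpa [Function.comp_def, mul_pow, hY2, Real.sq_sqrt (hl0 _)] using this

lemma IsCSG.hasGaussianLaw {Ω : Type*} [MeasureSpace Ω]
    {Z : ℤ → Ω → ℝ} {r : ℤ → ℝ} (hZ : IsCSG Z r) (n : ℕ) :
    HasGaussianLaw (fun ω (i : Fin n) => Z (i : ℕ) ω) (ℙ : Measure Ω) := by
  have hm : Measurable fun ω (i : Fin n) => Z (i : ℕ) ω := measurable_pi_lambda _ fun i => hZ.1 _
  refine ⟨isGaussian_of_map_eq_gaussianReal fun L => ?_⟩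
  let e : Fin n ↪ ℤ := ⟨fun i => ((i : ℕ) : ℤ), fun i j h => by simpa [Fin.ext_iff] using h⟩
  obtain ⟨v, hv⟩ := hZ.2.1 (Finset.univ.map e)
    (Function.extend e (fun i => L (Pi.single i 1)) 0)
  refine ⟨0, v, ?_⟩
  rw [Measure.map_map (by fun_prop) hm, ← hv]
  congr 1
  funext ω
  rw [Finset.sum_map]
  simp only [e.injective.extend_apply, Function.comp_apply]
  conv_lhs => rw [← Finset.univ_sum_single (fun i : Fin n => Z (i : ℕ) ω), map_sum]
  refine Finset.sum_congr rfl fun i _ => ?_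
  have : (Pi.single i (Z (i : ℕ) ω) : Fin n → ℝ) = Z (i : ℕ) ω • Pi.single i 1 := by
    rw [← Pi.single_smul, smul_eq_mul, mul_one]
  rw [this, map_smul, smul_eq_mul, mul_comm]
  rfl

lemma IsCSG.integral_eq_zero {Ω : Type*} [MeasureSpace Ω]
    {Z : ℤ → Ω → ℝ} {r : ℤ → ℝ} (hZ : IsCSG Z r) (k : ℤ) : ∫ ω, Z k ω = 0 := by
  obtain ⟨v, hv⟩ := hZ.2.1 {k} 1
  simp only [Finset.sum_singleton, Pi.one_apply, one_mul] at hv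
  have := integral_map (hZ.1 k).aemeasurable (μ := ℙ) (f := id) (by fun_prop)
  rw [hv] at this
  simpa using this.symm

lemma IsCSG.exists_map_F2stat_eq {Ω : Type*} [MeasureSpace Ω] [IsProbabilityMeasure (ℙ : Measure Ω)]
    {Z : ℤ → Ω → ℝ} {r : ℤ → ℝ} (hZ : IsCSG Z r) {n : ℕ} (hn : 1 ≤ n) :
    ∃ α : Fin n → ℝ, (∀ i, 0 ≤ α i) ∧ ∑ i, α i ^ 2 = 1 / 2 ∧
      Measure.map (F2stat Z (r 0) n) (ℙ : Measure Ω) = (stdGaussianPi n).map (quadForm α) := by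
  obtain ⟨l, hl0, hlsum, hlaw⟩ := exists_map_sum_sq_eq (hZ.hasGaussianLaw n)
    fun i => hZ.integral_eq_zero _
  have hvar : ∀ k : ℤ, ∫ ω, Z k ω ^ 2 = r 0 := fun k => by
    simpa [pow_two] using hZ.2.2.1 k k
  have hn0 : (0 : ℝ) < n := by exact_mod_cast hn
  have hlsum' : ∑ i, l i = n * r 0 := by simp [hlsum, hvar]
  set K : ℝ := √n * (1 / n) with hK
  have hK0 : 0 < K := by positivity
  have hZm : Measurable fun ω => ∑ i : Fin n, Z (i : ℕ) ω ^ 2 :=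
    Finset.measurable_sum _ fun i _ => (hZ.1 _).pow_const 2
  have hU : ∀ ω, U2 Z (r 0) n ω = K * (∑ i : Fin n, Z (i : ℕ) ω ^ 2 - ∑ i, l i) := fun ω => by
    rw [U2, Qvar, Finset.sum_range, hlsum', hK]
    simp only [f2]
    field_simp
  have hmap : ∀ c : ℝ, Measure.map (fun ω => c * U2 Z (r 0) n ω) (ℙ : Measure Ω) =
      (stdGaussianPi n).map (quadForm fun i => c * K * l i) := fun c => by
    have hg : Measurable fun y : ℝ => c * (K * (y - ∑ i, l i)) := by fun_prop
    have := congrArg (Measure.map fun y : ℝ => c * (K * (y - ∑ i, l i))) hlaw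
    rw [Measure.map_map hg hZm, Measure.map_map hg (by fun_prop)] at this
    simp_rw [hU]
    refine this.trans ?_
    congr 1
    funext x
    simp only [Function.comp_apply, quadForm, ← Finset.sum_sub_distrib, Finset.mul_sum]
    exact Finset.sum_congr rfl fun i _ => by ring
  have hvarU : varU2 Z (r 0) n = 2 * ∑ i, (K * l i) ^ 2 := by
    have hm : Measurable (U2 Z (r 0) n) := by
      rw [show U2 Z (r 0) n = _ from funext hU]
      exact (hZm.sub_const _).const_mul _
    have h1 := hmap 1
    simp only [one_mul] at h1
    rw [varU2, ← integral_map (φ := U2 Z (r 0) n) (f := fun y => y ^ 2) hm.aemeasurable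
      (by fun_prop)]
    rw [h1, integral_map_quadForm (by fun_prop)]
    simp_rw [pow_two]
    rw [integral_quadForm_mul_quadForm]
  have hpos : 0 < varU2 Z (r 0) n := by
    rw [hvarU]
    obtain ⟨i, -, hi⟩ : ∃ i ∈ Finset.univ, 0 < l i := by
      by_contra! h
      have := Finset.sum_nonpos h
      rw [hlsum'] at this
      exact absurd this (not_le.2 (mul_pos hn0 hZ.2.2.2))
    have : 0 < ∑ i, (K * l i) ^ 2 :=
      Finset.sum_pos' (fun i _ => sq_nonneg _) ⟨i, Finset.mem_univ i, by positivity⟩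
    positivity
  refine ⟨fun i => (√(varU2 Z (r 0) n))⁻¹ * K * l i, fun i => ?_, ?_, ?_⟩
  · have := hl0 i
    positivity
  · simp_rw [mul_assoc, mul_pow _ (K * _)]
    rw [← Finset.mul_sum, inv_pow, Real.sq_sqrt hpos.le]
    have : ∑ i, (K * l i) ^ 2 = varU2 Z (r 0) n / 2 := by rw [hvarU]; ring
    rw [this]
    field_simp
  · rw [← hmap]
    congr 1
    funext ω
    rw [F2stat, div_eq_inv_mul]

lemma IsCSG.measurable_F2stat {Ω : Type*} [MeasureSpace Ω] {Z : ℤ → Ω → ℝ} {r : ℤ → ℝ}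
    (hZ : IsCSG Z r) (n : ℕ) : Measurable (F2stat Z (r 0) n) := by
  have : Measurable (Qvar f2 Z n) :=
    (Finset.measurable_sum _ fun i _ => (hZ.1 _).pow_const 2).const_mul _
  exact ((this.sub_const _).const_mul _).div_const _

lemma kappa3_of_map_eq {Ω : Type*} [MeasureSpace Ω] {F : Ω → ℝ} (hF : Measurable F) {n : ℕ}
    {α : Fin n → ℝ} (h : Measure.map F (ℙ : Measure Ω) = (stdGaussianPi n).map (quadForm α)) :
    kappa3 F = 8 * ∑ i, α i ^ 3 := by
  rw [kappa3, ← integral_map (f := fun y => y ^ 3) hF.aemeasurable (by fun_prop), h,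
    integral_map_quadForm (by fun_prop)]
  simp_rw [pow_succ' _ 2]
  exact integral_quadForm_mul_sq

lemma kappa4_of_map_eq {Ω : Type*} [MeasureSpace Ω] {F : Ω → ℝ} (hF : Measurable F) {n : ℕ}
    {α : Fin n → ℝ} (h : Measure.map F (ℙ : Measure Ω) = (stdGaussianPi n).map (quadForm α)) :
    kappa4 F = 48 * ∑ i, α i ^ 4 := by
  rw [kappa4, ← integral_map (f := fun y => y ^ 4) hF.aemeasurable (by fun_prop),
    ← integral_map (f := fun y => y ^ 2) hF.aemeasurable (by fun_prop), h,
    integral_map_quadForm (by fun_prop), integral_map_quadForm (by fun_prop)]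
  simp_rw [pow_succ' (quadForm α _) 3]
  rw [integral_quadForm_mul_cube]
  simp_rw [pow_two (quadForm α _), integral_quadForm_mul_quadForm, ← pow_two, pow_succ' (α _) 3]
  ring

lemma exists_pos_mul_le_of_eventually {a b : ℕ → ℝ} (ha : ∀ n, 1 ≤ n → 0 < a n)
    (hb : ∀ n, 1 ≤ n → 0 < b n) {c : ℝ} (hc : 0 < c) (h : ∀ᶠ n in atTop, c * a n ≤ b n) :
    ∃ c' > (0 : ℝ), ∀ n, 1 ≤ n → c' * a n ≤ b n := by
  obtain ⟨N, hN⟩ := eventually_atTop.1 h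
  have hfin : ∀ M : ℕ, ∃ c' > (0 : ℝ), ∀ n, 1 ≤ n → n < M → c' * a n ≤ b n := by
    intro M
    induction M with
    | zero => exact ⟨1, one_pos, fun n _ h => absurd h (Nat.not_lt_zero n)⟩
    | succ M ih =>
      obtain ⟨c', hc', hM⟩ := ih
      by_cases h1 : 1 ≤ M
      · refine ⟨min c' (b M / a M), lt_min hc' (div_pos (hb M h1) (ha M h1)), fun n hn hnM => ?_⟩
        have hle : ∀ d, min c' (b M / a M) ≤ d → min c' (b M / a M) * a n ≤ d * a n := fun d hd =>
          mul_le_mul_of_nonneg_right hd (ha n hn).le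
        rcases Nat.lt_succ_iff_lt_or_eq.1 hnM with h2 | rfl
        · exact (hle _ (min_le_left _ _)).trans (hM n hn h2)
        · exact (hle _ (min_le_right _ _)).trans (div_mul_cancel₀ _ (ha n hn).ne').le
      · exact ⟨c', hc', fun n hn hnM => absurd hnM (by omega)⟩
  obtain ⟨c', hc', hM⟩ := hfin N
  refine ⟨min c c', lt_min hc hc', fun n hn => ?_⟩
  rcases lt_or_ge n N with h1 | h1
  · exact (mul_le_mul_of_nonneg_right (min_le_right _ _) (ha n hn).le).trans (hM n hn h1)
  · exact (mul_le_mul_of_nonneg_right (min_le_left _ _) (ha n hn).le).trans (hN n h1)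

lemma sum_pow_four_le_mul_sum_pow_three {n : ℕ} {α : Fin n → ℝ} (h0 : ∀ i, 0 ≤ α i) {ε : ℝ}
    (hε : 0 ≤ ε) (h : ∑ i, α i ^ 4 ≤ ε ^ 4) : ∑ i, α i ^ 4 ≤ ε * ∑ i, α i ^ 3 := by
  rw [Finset.mul_sum]
  refine Finset.sum_le_sum fun i _ => ?_
  have h1 : α i ^ 4 ≤ ε ^ 4 := (Finset.single_le_sum (f := fun i => α i ^ 4)
    (fun i _ => pow_nonneg (h0 i) 4) (Finset.mem_univ i)).trans h
  have h2 : α i ≤ ε := le_of_pow_le_pow_left₀ (by norm_num) hε h1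
  rw [pow_succ']
  exact mul_le_mul_of_nonneg_right h2 (pow_nonneg (h0 i) 3)

lemma sum_pow_three_pos {n : ℕ} {α : Fin n → ℝ} (h0 : ∀ i, 0 ≤ α i)
    (hα : ∑ i, α i ^ 2 = 1 / 2) : 0 < ∑ i, α i ^ 3 := by
  obtain ⟨i, -, hi⟩ : ∃ i ∈ Finset.univ, 0 < α i := by
    by_contra! h
    have : ∀ i, α i = 0 := fun i => le_antisymm (h i (Finset.mem_univ i)) (h0 i)
    simp [this] at hα
  exact Finset.sum_pos' (fun i _ => pow_nonneg (h0 i) 3) ⟨i, Finset.mem_univ i, by positivity⟩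

/-- optimal fourth-moment theorem for the standardized quadratic
variation: two-sided total-variation bounds by `max(κ₄, |κ₃|)`. -/
theorem statement_11
    {Ω : Type*} [MeasureSpace Ω] [IsProbabilityMeasure (ℙ : Measure Ω)]
    (Z : ℤ → Ω → ℝ) (r : ℤ → ℝ) (hZ : IsCSG Z r)
    (hk4 : Filter.Tendsto (fun n : ℕ => kappa4 (F2stat Z (r 0) n)) Filter.atTop (nhds 0)) :
    ∃ c > (0 : ℝ), ∃ C > (0 : ℝ), ∀ n : ℕ, 1 ≤ n →
      c * max (kappa4 (F2stat Z (r 0) n)) |kappa3 (F2stat Z (r 0) n)| ≤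
          dTV (Measure.map (F2stat Z (r 0) n) (ℙ : Measure Ω)) (gaussianReal 0 1) ∧
        dTV (Measure.map (F2stat Z (r 0) n) (ℙ : Measure Ω)) (gaussianReal 0 1) ≤
          C * max (kappa4 (F2stat Z (r 0) n)) |kappa3 (F2stat Z (r 0) n)| := by
  have hred := fun n : ℕ => fun hn : 1 ≤ n => hZ.exists_map_F2stat_eq hn
  set D : ℕ → ℝ := fun n => dTV (Measure.map (F2stat Z (r 0) n) (ℙ : Measure Ω)) (gaussianReal 0 1)
    with hD
  set M : ℕ → ℝ := fun n => max (kappa4 (F2stat Z (r 0) n)) |kappa3 (F2stat Z (r 0) n)| with hM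
  obtain ⟨C, hC, hup⟩ := exists_dTV_map_quadForm_le
  have hMpos : ∀ n, 1 ≤ n → 0 < M n := fun n hn => by
    obtain ⟨α, h0, hα, hmap⟩ := hred n hn
    have hs := sum_pow_three_pos h0 hα
    refine lt_max_of_lt_right (abs_pos.2 ?_)
    rw [kappa3_of_map_eq (hZ.measurable_F2stat n) hmap]
    positivity
  have hDpos : ∀ n, 1 ≤ n → 0 < D n := fun n hn => by
    obtain ⟨α, h0, hα, hmap⟩ := hred n hn
    simp only [hD, hmap]
    exact dTV_map_quadForm_pos hα
  have hsmall : ∀ᶠ n in atTop, kappa4 (F2stat Z (r 0) n) < 48 * (1 / 16) ^ 4 :=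
    hk4.eventually_lt_const (by norm_num)
  have hlow : ∀ᶠ n in atTop, 1 / 384 * M n ≤ D n := by
    filter_upwards [hsmall, eventually_ge_atTop 1] with n hn4 hn
    obtain ⟨α, h0, hα, hmap⟩ := hred n hn
    have hs := sum_pow_three_pos h0 hα
    have h3 := kappa3_of_map_eq (hZ.measurable_F2stat n) hmap
    have h4 := kappa4_of_map_eq (hZ.measurable_F2stat n) hmap
    have hle := sum_pow_four_le_sum_pow_three h0 hα
    have hle' := sum_pow_four_le_mul_sum_pow_three h0 (ε := 1 / 16) (by norm_num) (by linarith)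
    have hlo := le_dTV_map_quadForm h0 hα
    have hMle : M n ≤ 48 * ∑ i, α i ^ 3 := by
      refine max_le (by linarith) ?_
      rw [h3, abs_of_pos (by positivity)]
      linarith
    simp only [hD, hmap]
    linarith
  obtain ⟨c, hc, hcle⟩ := exists_pos_mul_le_of_eventually hMpos hDpos (by norm_num) hlow
  refine ⟨c, hc, C, hC, fun n hn => ⟨hcle n hn, ?_⟩⟩
  obtain ⟨α, h0, hα, hmap⟩ := hred n hn
  have hs := sum_pow_three_pos h0 hα
  have h3 := kappa3_of_map_eq (hZ.measurable_F2stat n) hmap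
  rw [hmap]
  refine (hup n α h0 hα).trans (mul_le_mul_of_nonneg_left ?_ hC.le)
  refine le_max_of_le_right ?_
  rw [h3, abs_of_pos (by positivity)]
  linarith

end
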